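/- For α ∈ (0,π/2] let B(α) := (cos(α/2), sin(α/2), 0) (the unit magnetic field tangent to a face of the wedge W_α and normal to its edge, i.e. with spherical coordinates (π/2, (π−α)/2)). Then the map α ↦ λ(B(α);W_α) is non-decreasing on (0,π/2]. -/

import Mathlib

open Real MeasureTheory Set Filter

noncomputable section

namespace MagWedge

/-- The infinite sector `S_α := {(x₁,x₂) : |x₂| ≤ x₁·tan(α/2)}`. -/
def sector (α : ℝ) : Set (ℝ × ℝ) :=
  {x | |x.2| ≤ x.1 * Real.tan (α / 2)}

/-- The infinite wedge `W_α := S_α × ℝ` (coordinates `(x₁, x₂, x₃)`). -/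
def wedge (α : ℝ) : Set (ℝ × ℝ × ℝ) :=
  {x | |x.2.1| ≤ x.1 * Real.tan (α / 2)}

/-- The upper half-plane `Hp^up := {x₂ < x₁·tan(α/2)}`. -/
def hpUp (α : ℝ) : Set (ℝ × ℝ) :=
  {x | x.2 < x.1 * Real.tan (α / 2)}

/-- The lower half-plane `Hp^low := {x₂ > −x₁·tan(α/2)}`. -/
def hpLow (α : ℝ) : Set (ℝ × ℝ) :=
  {x | -(x.1 * Real.tan (α / 2)) < x.2}

/-- The magnetic/electric energy of `u` on a planar domain `Ω`, for magnetic field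
`(b₁,b₂,b₃)` (gauge `A̲ = (−x₂ b₃, 0)`) and Fourier parameter `τ`. -/
def energy2D (Ω : Set (ℝ × ℝ)) (b1 b2 b3 τ : ℝ) (u : ℝ × ℝ → ℂ) : ℝ :=
  ∫ x in Ω,
    ‖(-Complex.I) * fderiv ℝ u x (1, 0) + ((x.2 * b3 : ℝ) : ℂ) * u x‖ ^ 2
      + ‖fderiv ℝ u x (0, 1)‖ ^ 2
      + (x.1 * b2 - x.2 * b1 - τ) ^ 2 * ‖u x‖ ^ 2

/-- The squared `L²`-norm of `u` on a planar domain `Ω`. -/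
def norm2D (Ω : Set (ℝ × ℝ)) (u : ℝ × ℝ → ℂ) : ℝ := ∫ x in Ω, ‖u x‖ ^ 2

/-- The bottom of the spectrum of the Neumann realization of
`(−i∇−A̲)² + (x₁b₂−x₂b₁−τ)²` on `Ω`, via the Rayleigh quotient. -/
def specInf2D (Ω : Set (ℝ × ℝ)) (b1 b2 b3 τ : ℝ) : ℝ :=
  sInf { r : ℝ | ∃ u : ℝ × ℝ → ℂ, ContDiff ℝ (⊤ : ℕ∞) u ∧ HasCompactSupport u ∧
    0 < norm2D Ω u ∧ r = energy2D Ω b1 b2 b3 τ u / norm2D Ω u }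

/-- The band function `s(B;α,τ)` on the sector `S_α`. -/
def bandFn (α b1 b2 b3 τ : ℝ) : ℝ := specInf2D (sector α) b1 b2 b3 τ

/-- `Σ(B;α,τ,R)` : the Rayleigh quotient infimum over functions supported outside the
(closed Euclidean) ball of radius `R` centered at the origin. -/
def SigmaR (α b1 b2 b3 τ R : ℝ) : ℝ :=
  sInf { r : ℝ | ∃ u : ℝ × ℝ → ℂ, ContDiff ℝ (⊤ : ℕ∞) u ∧ HasCompactSupport u ∧
    (tsupport u ⊆ {x : ℝ × ℝ | R ^ 2 < x.1 ^ 2 + x.2 ^ 2}) ∧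
    0 < norm2D (sector α) u ∧
    r = energy2D (sector α) b1 b2 b3 τ u / norm2D (sector α) u }

/-- The bottom of the essential spectrum via Persson's characterization:
`s_ess(B;α,τ) = sup_{R>0} Σ(B;α,τ,R)`. -/
def sEss (α b1 b2 b3 τ : ℝ) : ℝ :=
  sSup { r : ℝ | ∃ R > (0 : ℝ), r = SigmaR α b1 b2 b3 τ R }

/-- The 3D magnetic energy on a domain `Ω ⊆ ℝ³` for the constant field `(b₁,b₂,b₃)`,
in the gauge `A = (−x₂b₃, 0, x₂b₁ − x₁b₂)`. -/
def energy3D (Ω : Set (ℝ × ℝ × ℝ)) (b1 b2 b3 : ℝ) (u : ℝ × ℝ × ℝ → ℂ) : ℝ :=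
  ∫ x in Ω,
    ‖(-Complex.I) * fderiv ℝ u x (1, 0, 0) + ((x.2.1 * b3 : ℝ) : ℂ) * u x‖ ^ 2
      + ‖fderiv ℝ u x (0, 1, 0)‖ ^ 2
      + ‖(-Complex.I) * fderiv ℝ u x (0, 0, 1) - ((x.2.1 * b1 : ℝ) : ℂ) * u x
          + ((x.1 * b2 : ℝ) : ℂ) * u x‖ ^ 2

/-- The squared `L²`-norm of `u` on a domain `Ω ⊆ ℝ³`. -/
def norm3D (Ω : Set (ℝ × ℝ × ℝ)) (u : ℝ × ℝ × ℝ → ℂ) : ℝ := ∫ x in Ω, ‖u x‖ ^ 2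

/-- `λ(B;W_α)` : the bottom of the spectrum of the Neumann magnetic Laplacian on the
wedge `W_α` with constant magnetic field `B = (b₁,b₂,b₃)`. -/
def lambdaWedge (α b1 b2 b3 : ℝ) : ℝ :=
  sInf { r : ℝ | ∃ u : ℝ × ℝ × ℝ → ℂ, ContDiff ℝ (⊤ : ℕ∞) u ∧ HasCompactSupport u ∧
    0 < norm3D (wedge α) u ∧ r = energy3D (wedge α) b1 b2 b3 u / norm3D (wedge α) u }

/-- The de Gennes function `μ₁(ξ)`: bottom of the spectrum of the Neumann realization of
`−d²/dt² + (t−ξ)²` on the half-line. -/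
def deGennes (ξ : ℝ) : ℝ :=
  sInf { r : ℝ | ∃ u : ℝ → ℂ, ContDiff ℝ (⊤ : ℕ∞) u ∧ HasCompactSupport u ∧
    (0 < ∫ t in Ioi (0 : ℝ), ‖u t‖ ^ 2) ∧
    r = (∫ t in Ioi (0 : ℝ), ‖deriv u t‖ ^ 2 + (t - ξ) ^ 2 * ‖u t‖ ^ 2) /
        (∫ t in Ioi (0 : ℝ), ‖u t‖ ^ 2) }

/-- `Θ₀ := inf_ξ μ₁(ξ)`. -/
def Theta0 : ℝ := ⨅ ξ : ℝ, deGennes ξ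

/-- The half-space `{(s,t,z) : t > 0}` in ℝ³. -/
def halfSpace3 : Set (ℝ × ℝ × ℝ) := {x | 0 < x.2.1}

/-- `σ(θ)` : the bottom of the spectrum of the Neumann magnetic Laplacian on the half-space
with a unit magnetic field making angle `θ` with the boundary. -/
def sigmaHS (θ : ℝ) : ℝ :=
  sInf { r : ℝ | ∃ u : ℝ × ℝ × ℝ → ℂ, ContDiff ℝ (⊤ : ℕ∞) u ∧ HasCompactSupport u ∧
    (0 < ∫ x in halfSpace3, ‖u x‖ ^ 2) ∧
    r = (∫ x in halfSpace3,
          ‖fderiv ℝ u x (1, 0, 0)‖ ^ 2 + ‖fderiv ℝ u x (0, 1, 0)‖ ^ 2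
            + ‖(-Complex.I) * fderiv ℝ u x (0, 0, 1)
                - ((x.2.1 * Real.cos θ : ℝ) : ℂ) * u x
                + ((x.1 * Real.sin θ : ℝ) : ℂ) * u x‖ ^ 2) /
        (∫ x in halfSpace3, ‖u x‖ ^ 2) }

/-- `μ(α)` : the bottom of the spectrum of the magnetic Neumann Laplacian on the sector
`S_α` with unit constant (scalar) magnetic field. -/
def muSector (α : ℝ) : ℝ :=
  sInf { r : ℝ | ∃ u : ℝ × ℝ → ℂ, ContDiff ℝ (⊤ : ℕ∞) u ∧ HasCompactSupport u ∧
    0 < norm2D (sector α) u ∧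
    r = (∫ x in sector α,
          ‖(-Complex.I) * fderiv ℝ u x (1, 0) + (x.2 : ℂ) * u x‖ ^ 2
            + ‖fderiv ℝ u x (0, 1)‖ ^ 2) / norm2D (sector α) u }

end MagWedge

namespace MagWedge

abbrev E3 := ℝ × ℝ × ℝ

instance instHaar2 : (volume : Measure (ℝ × ℝ)).IsAddHaarMeasure := by
  rw [Measure.volume_eq_prod]; infer_instance

instance instHaar3 : (volume : Measure E3).IsAddHaarMeasure := by
  rw [Measure.volume_eq_prod]; infer_instance

/-- The linear change of variables (scaled reflection). -/
def chg (C S c : ℝ) (h : C ^ 2 + S ^ 2 = 1) (hc : c ≠ 0) : E3 ≃ₗ[ℝ] E3 where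
  toFun x := (c * (x.1 * C + x.2.1 * S), x.1 * S - x.2.1 * C, x.2.2)
  invFun y := (c⁻¹ * y.1 * C + y.2.1 * S, c⁻¹ * y.1 * S - y.2.1 * C, y.2.2)
  map_add' x y := by
    ext <;> simp <;> ring
  map_smul' a x := by
    ext <;> simp <;> ring
  left_inv x := by
    ext
    · simp only
      rw [inv_mul_cancel_left₀ hc]; linear_combination x.1 * h
    · simp only
      rw [inv_mul_cancel_left₀ hc]; linear_combination x.2.1 * h
    · rfl
  right_inv y := by
    have hc' : c * c⁻¹ = 1 := mul_inv_cancel₀ hc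
    ext
    · simp only
      linear_combination y.1 * h * (c * c⁻¹) + y.1 * hc'
    · simp only
      linear_combination y.2.1 * h
    · rfl

lemma chg_apply (C S c : ℝ) (h : C ^ 2 + S ^ 2 = 1) (hc : c ≠ 0) (x : E3) :
    (chg C S c h hc).toContinuousLinearEquiv x
      = (c * (x.1 * C + x.2.1 * S), x.1 * S - x.2.1 * C, x.2.2) := rfl

lemma cov (L : E3 ≃L[ℝ] E3) : ∃ m : ℝ, 0 < m ∧ ∀ (D : Set E3) (f : E3 → ℝ),
    ∫ x in L ⁻¹' D, f (L x) = m * ∫ y in D, f y := by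
  have hdet : LinearMap.det (L.toLinearEquiv : E3 →ₗ[ℝ] E3) ≠ 0 := L.toLinearEquiv.isUnit_det'.ne_zero
  refine ⟨|(LinearMap.det (L.toLinearEquiv : E3 →ₗ[ℝ] E3))⁻¹|, abs_pos.2 (inv_ne_zero hdet), ?_⟩
  intro D f
  have hm := Measure.map_linearMap_addHaar_eq_smul_addHaar (volume : Measure E3) hdet
  have e : MeasurableEmbedding L := L.toHomeomorph.measurableEmbedding
  have := e.setIntegral_map (μ := volume) f D
  rw [← this]
  have hm' : Measure.map L (volume : Measure E3) = _ := hm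
  rw [hm', Measure.restrict_smul, integral_smul_measure]
  rw [ENNReal.toReal_ofReal (abs_nonneg _), smul_eq_mul]

/-- model domain -/
def dom (κ : ℝ) : Set E3 := {y | 0 ≤ y.2.1 ∧ κ * y.2.1 ≤ y.1}

/-- model density -/
def dens (c : ℝ) (w : E3 → ℂ) (y : E3) : ℝ :=
  c ^ 2 * ‖fderiv ℝ w y (1, 0, 0)‖ ^ 2 + ‖fderiv ℝ w y (0, 1, 0)‖ ^ 2
    + ‖(-Complex.I) * fderiv ℝ w y (0, 0, 1) + (y.2.1 : ℂ) * w y‖ ^ 2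

lemma wedge_eq (α c : ℝ) (h0 : 0 < α) (h1 : α ≤ π / 2) (hc : 0 < c)
    (h : cos (α / 2) ^ 2 + sin (α / 2) ^ 2 = 1) :
    wedge α = (chg (cos (α / 2)) (sin (α / 2)) c h hc.ne').toContinuousLinearEquiv ⁻¹'
      dom (c * (cos α / sin α)) := by
  have hC : 0 < cos (α / 2) := cos_pos_of_mem_Ioo ⟨by linarith, by linarith [pi_pos]⟩
  have hs : 0 < sin α := sin_pos_of_pos_of_lt_pi h0 (by linarith [pi_pos])
  have e1 : sin α = 2 * sin (α / 2) * cos (α / 2) := by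
    rw [← sin_two_mul]; ring_nf
  have e2 : cos α = cos (α / 2) ^ 2 - sin (α / 2) ^ 2 := by
    rw [← cos_two_mul']; ring_nf
  ext x
  simp only [wedge, dom, mem_preimage, mem_ofPred_eq, chg_apply, tan_eq_sin_div_cos, abs_le]
  set C := cos (α / 2)
  set S := sin (α / 2)
  have k1 : x.2.1 ≤ x.1 * (S / C) ↔ 0 ≤ x.1 * S - x.2.1 * C := by
    rw [← mul_div_assoc, le_div_iff₀ hC, sub_nonneg]
  have k2 : -(x.1 * (S / C)) ≤ x.2.1 ↔
      c * (cos α / sin α) * (x.1 * S - x.2.1 * C) ≤ c * (x.1 * C + x.2.1 * S) := by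
    rw [mul_assoc, mul_le_mul_iff_right₀ hc, div_mul_eq_mul_div, div_le_iff₀ hs,
      ← mul_div_assoc, neg_le_iff_add_nonneg, ← sub_nonneg (b := cos α * _)]
    have : (x.1 * C + x.2.1 * S) * sin α - cos α * (x.1 * S - x.2.1 * C)
        = C * (x.2.1 + x.1 * S / C) := by
      rw [e1, e2]
      field_simp
      linear_combination (x.1 * S + x.2.1 * C) * h
    rw [this, mul_nonneg_iff_of_pos_left hC]
  rw [k1, k2, and_comm]

lemma key (α c : ℝ) (h0 : 0 < α) (h1 : α ≤ π / 2) (hc : 0 < c)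
    (h : cos (α / 2) ^ 2 + sin (α / 2) ^ 2 = 1) (w : E3 → ℂ) (hw : ContDiff ℝ (⊤ : ℕ∞) w) :
    ∃ m : ℝ, 0 < m ∧
      norm3D (wedge α) (w ∘ (chg (cos (α / 2)) (sin (α / 2)) c h hc.ne').toContinuousLinearEquiv)
        = m * (∫ y in dom (c * (cos α / sin α)), ‖w y‖ ^ 2) ∧
      energy3D (wedge α) (cos (α / 2)) (sin (α / 2)) 0
        (w ∘ (chg (cos (α / 2)) (sin (α / 2)) c h hc.ne').toContinuousLinearEquiv)
        = m * (∫ y in dom (c * (cos α / sin α)), dens c w y) := by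
  obtain ⟨m, hm, H⟩ := cov (chg (cos (α / 2)) (sin (α / 2)) c h hc.ne').toContinuousLinearEquiv
  refine ⟨m, hm, ?_, ?_⟩
  · rw [← H, norm3D, ← wedge_eq α c h0 h1 hc h]; rfl
  · rw [← H, energy3D, ← wedge_eq α c h0 h1 hc h]
    congr 1
    ext x
    set L := (chg (cos (α / 2)) (sin (α / 2)) c h hc.ne').toContinuousLinearEquiv with hL
    have hd : fderiv ℝ (w ∘ L) x = (fderiv ℝ w (L x)).comp (L : E3 →L[ℝ] E3) :=
      L.comp_right_fderiv
    set C := cos (α / 2)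
    set S := sin (α / 2)
    have a1 : L (1, 0, 0) = (c * C) • ((1, 0, 0) : E3) + S • ((0, 1, 0) : E3) := by
      rw [hL, chg_apply]; simp [C, S]
    have a2 : L (0, 1, 0) = (c * S) • ((1, 0, 0) : E3) - C • ((0, 1, 0) : E3) := by
      rw [hL, chg_apply]; simp [C, S]
    have a3 : L (0, 0, 1) = ((0, 0, 1) : E3) := by
      rw [hL, chg_apply]; simp [C, S]
    have a4 : (L x).2.1 = x.1 * S - x.2.1 * C := rfl
    simp only [hd, ContinuousLinearMap.comp_apply, ContinuousLinearEquiv.coe_coe, a1, a2, a3,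
      map_add, map_sub, map_smul, dens, a4, Function.comp]
    set p := fderiv ℝ w (L x) (1, 0, 0)
    set q := fderiv ℝ w (L x) (0, 1, 0)
    have b1 : ‖-Complex.I * ((c * C) • p + S • q) + ((x.2.1 * 0 : ℝ) : ℂ) * w (L x)‖ ^ 2
        + ‖(c * S) • p - C • q‖ ^ 2 = c ^ 2 * ‖p‖ ^ 2 + ‖q‖ ^ 2 := by
      rw [mul_zero, Complex.ofReal_zero, zero_mul, add_zero, norm_mul, norm_neg, Complex.norm_I,
        one_mul]
      simp only [Complex.sq_norm, Complex.normSq_apply, Complex.add_re, Complex.add_im,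
        Complex.sub_re, Complex.sub_im, Complex.real_smul, Complex.re_ofReal_mul,
        Complex.im_ofReal_mul]
      linear_combination (c ^ 2 * (p.re ^ 2 + p.im ^ 2) + (q.re ^ 2 + q.im ^ 2)) * h
    rw [b1]
    congr 3
    push_cast
    ring

lemma normsq_integrable (w : E3 → ℂ) (hw : Continuous w) (hs : HasCompactSupport w) :
    Integrable (fun x : E3 => ‖w x‖ ^ 2) := by
  have hc : Continuous (fun x : E3 => ‖w x‖ ^ 2) := by fun_prop
  refine hc.integrable_of_hasCompactSupport ?_
  refine hs.mono ?_
  intro y hy h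
  apply hy
  simp only [h]
  simp

lemma nonempty_test (α : ℝ) (h0 : 0 < α) (h1 : α ≤ π / 2) :
    ∃ u : E3 → ℂ, ContDiff ℝ (⊤ : ℕ∞) u ∧ HasCompactSupport u ∧ 0 < norm3D (wedge α) u := by
  let f : ContDiffBump (0 : E3) := ⟨1, 2, one_pos, by norm_num⟩
  have hf : ContDiff ℝ (⊤ : ℕ∞) (fun x => (f x : ℂ)) := Complex.ofRealCLM.contDiff.comp f.contDiff
  have hs : HasCompactSupport (fun x => (f x : ℂ)) :=
    f.hasCompactSupport.comp_left (g := fun r : ℝ => (r : ℂ)) (by simp)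
  refine ⟨fun x => (f x : ℂ), hf, hs, ?_⟩
  have ht : 0 < tan (α / 2) := tan_pos_of_pos_of_lt_pi_div_two (by linarith) (by linarith)
  have hi : Integrable (fun x : E3 => ‖(f x : ℂ)‖ ^ 2) :=
    normsq_integrable _ hf.continuous hs
  unfold norm3D
  rw [setIntegral_pos_iff_support_of_nonneg_ae (Eventually.of_forall fun x => by positivity)
    hi.integrableOn]
  let U : Set E3 := Metric.ball 0 1 ∩ {x | |x.2.1| < x.1 * tan (α / 2)}
  have hU : IsOpen U := Metric.isOpen_ball.inter
    (isOpen_lt (by fun_prop) (by fun_prop))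
  have hUn : U.Nonempty := by
    refine ⟨(1 / 2, 0, 0), ?_, ?_⟩
    · simp [Prod.norm_def]; norm_num
    · simp [ht]
  refine lt_of_lt_of_le (hU.measure_pos volume hUn) (measure_mono ?_)
  rintro x ⟨hx1, hx2⟩
  have hx3 : |x.2.1| < x.1 * tan (α / 2) := hx2
  refine ⟨?_, show |x.2.1| ≤ x.1 * tan (α / 2) from hx3.le⟩
  have : f x = 1 := f.one_of_mem_closedBall (Metric.ball_subset_closedBall hx1)
  simp [this]

lemma dom_meas (κ : ℝ) : MeasurableSet (dom κ) := by
  have h1 : IsClosed {y : E3 | 0 ≤ y.2.1} := isClosed_le (by fun_prop) (by fun_prop)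
  have h2 : IsClosed {y : E3 | κ * y.2.1 ≤ y.1} := isClosed_le (by fun_prop) (by fun_prop)
  exact (h1.inter h2).measurableSet

lemma dom_anti {κ κ' : ℝ} (h : κ' ≤ κ) : dom κ ⊆ dom κ' := fun _ hy =>
  ⟨hy.1, (mul_le_mul_of_nonneg_right h hy.1).trans hy.2⟩

lemma null_line (κ : ℝ) : volume {y : E3 | y.1 = κ * y.2.1} = 0 := by
  let l : E3 →ₗ[ℝ] ℝ := LinearMap.fst ℝ ℝ (ℝ × ℝ) -
    κ • (LinearMap.fst ℝ ℝ ℝ ∘ₗ LinearMap.snd ℝ ℝ (ℝ × ℝ))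
  have hl : ∀ y, l y = y.1 - κ * y.2.1 := fun y => rfl
  have : {y : E3 | y.1 = κ * y.2.1} = (LinearMap.ker l : Set E3) := by
    ext y
    simp [hl, sub_eq_zero]
  rw [this]
  apply Measure.addHaar_submodule
  intro h
  have : ((1, 0, 0) : E3) ∈ LinearMap.ker l := by rw [h]; trivial
  simp [hl] at this

lemma lim_dom (κ' : ℝ) (k : ℕ → ℝ) (hk : Antitone k) (hlt : ∀ n, κ' ≤ k n)
    (ht : Tendsto k atTop (nhds κ')) (f : E3 → ℝ) (hf : Integrable f) :
    Tendsto (fun n => ∫ y in dom (k n), f y) atTop (nhds (∫ y in dom κ', f y)) := by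
  have h1 := tendsto_setIntegral_of_monotone (μ := volume) (f := f) (s := fun n => dom (k n))
    (fun n => dom_meas _) (fun i j hij => dom_anti (hk hij)) hf.integrableOn
  have h2 : (⋃ n, dom (k n) : Set E3) =ᵐ[volume] dom κ' := by
    have hn : ∀ᵐ y : E3, ¬ (y.1 = κ' * y.2.1) := by
      rw [ae_iff]; simpa using null_line κ'
    refine eventuallyEq_set.2 ?_
    filter_upwards [hn] with y hy
    constructor
    · intro h
      obtain ⟨n, h⟩ := mem_iUnion.1 h
      exact dom_anti (hlt n) h
    · intro h
      have hlt' : κ' * y.2.1 < y.1 := lt_of_le_of_ne h.2 (Ne.symm hy)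
      have := (ht.mul_const y.2.1).eventually_lt_const hlt'
      obtain ⟨n, hn⟩ := this.exists
      exact mem_iUnion.2 ⟨n, h.1, hn.le⟩
  rwa [setIntegral_congr_set h2] at h1

lemma dens_integrable (c : ℝ) (w : E3 → ℂ) (hw : ContDiff ℝ (⊤ : ℕ∞) w)
    (hs : HasCompactSupport w) : Integrable (dens c w) := by
  have hc : Continuous (fderiv ℝ w) := hw.continuous_fderiv (by simp)
  have hw' := hw.continuous
  have hcont : Continuous (dens c w) := by
    unfold dens
    have : ∀ v, Continuous fun y => fderiv ℝ w y v := fun v => hc.clm_apply continuous_const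
    have t1 := this (1, 0, 0)
    have t2 := this (0, 1, 0)
    have t3 := this (0, 0, 1)
    fun_prop
  refine hcont.integrable_of_hasCompactSupport ?_
  refine hs.mono' ?_
  intro y hy
  by_contra hn
  apply hy
  have e1 : w y = 0 := image_eq_zero_of_notMem_tsupport hn
  have e2 : fderiv ℝ w y = 0 :=
    image_eq_zero_of_notMem_tsupport (fun h => hn (tsupport_fderiv_subset ℝ h))
  simp [dens, e1, e2]

lemma dens_nonneg (c : ℝ) (w : E3 → ℂ) (y : E3) : 0 ≤ dens c w y := by
  unfold dens; positivity

lemma cos_sin_one (α : ℝ) : cos (α / 2) ^ 2 + sin (α / 2) ^ 2 = 1 := cos_sq_add_sin_sq _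

lemma lambda_le (α b1 b2 b3 : ℝ) (u : E3 → ℂ) (hu : ContDiff ℝ (⊤ : ℕ∞) u)
    (hs : HasCompactSupport u) (hp : 0 < norm3D (wedge α) u) :
    lambdaWedge α b1 b2 b3 ≤ energy3D (wedge α) b1 b2 b3 u / norm3D (wedge α) u := by
  refine csInf_le ⟨0, ?_⟩ ⟨u, hu, hs, hp, rfl⟩
  rintro r ⟨v, -, -, hv, rfl⟩
  refine div_nonneg (integral_nonneg fun x => ?_) hv.le
  positivity

lemma main_ineq (α κ' : ℝ) (h0 : 0 < α) (h1 : α ≤ π / 2) (hκ' : 0 ≤ κ')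
    (hκ : κ' < cos α / sin α) (w : E3 → ℂ) (hw : ContDiff ℝ (⊤ : ℕ∞) w)
    (hs : HasCompactSupport w) :
    lambdaWedge α (cos (α / 2)) (sin (α / 2)) 0 * (∫ y in dom κ', ‖w y‖ ^ 2)
      ≤ ∫ y in dom κ', dens 1 w y := by
  set κ := cos α / sin α with hκdef
  set lam := lambdaWedge α (cos (α / 2)) (sin (α / 2)) 0
  let k : ℕ → ℝ := fun n => κ' + (κ - κ') * (1 / ((n : ℝ) + 1))
  have hd : 0 < κ - κ' := sub_pos.2 hκ
  have hκp : 0 < κ := lt_of_le_of_lt hκ' hκ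
  have hk : Antitone k := by
    intro i j hij
    have : 1 / ((j : ℝ) + 1) ≤ 1 / ((i : ℝ) + 1) := Nat.one_div_le_one_div hij
    simp only [k]
    gcongr
  have hkl : ∀ n, κ' < k n := fun n => by
    have : 0 < (κ - κ') * (1 / ((n : ℝ) + 1)) := mul_pos hd Nat.one_div_pos_of_nat
    simp only [k]; linarith
  have hku : ∀ n, k n ≤ κ := fun n => by
    have := hk (Nat.zero_le n)
    simpa [k] using this
  have hkt : Tendsto k atTop (nhds κ') := by
    have := (tendsto_one_div_add_atTop_nhds_zero_nat (𝕜 := ℝ)).const_mul (κ - κ')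
    simpa [k] using this.const_add κ'
  have hNi : Integrable (fun x : E3 => ‖w x‖ ^ 2) :=
    normsq_integrable w hw.continuous hs
  have hlim := (lim_dom κ' k hk (fun n => (hkl n).le) hkt _ hNi).const_mul lam
  refine le_of_tendsto' hlim fun n => ?_
  have hkp : 0 < k n := lt_of_le_of_lt hκ' (hkl n)
  have hc : 0 < k n / κ := div_pos hkp hκp
  have hc1 : k n / κ ≤ 1 := (div_le_one hκp).2 (hku n)
  obtain ⟨m, hm, hN, hE⟩ := key α (k n / κ) h0 h1 hc (cos_sin_one α) w hw
  rw [← hκdef, div_mul_cancel₀ _ hκp.ne'] at hN hE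
  have i1 : ∫ y in dom (k n), dens (k n / κ) w y ≤ ∫ y in dom (k n), dens 1 w y := by
    refine setIntegral_mono (dens_integrable _ w hw hs).integrableOn
      (dens_integrable _ w hw hs).integrableOn fun y => ?_
    simp only [dens]
    gcongr
  have i2 : ∫ y in dom (k n), dens 1 w y ≤ ∫ y in dom κ', dens 1 w y :=
    setIntegral_mono_set (dens_integrable _ w hw hs).integrableOn
      (Eventually.of_forall (dens_nonneg 1 w)) (dom_anti (hkl n).le).eventuallyLE
  refine le_trans ?_ (i1.trans i2)
  have hN0 : 0 ≤ ∫ y in dom (k n), ‖w y‖ ^ 2 := integral_nonneg fun y => by positivity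
  rcases hN0.eq_or_lt with h | h
  · rw [← h, mul_zero]
    exact integral_nonneg fun y => dens_nonneg _ w y
  · have hl := lambda_le α (cos (α / 2)) (sin (α / 2)) 0 _
      (hw.comp (ContinuousLinearEquiv.contDiff _))
      (hs.comp_homeomorph (chg (cos (α / 2)) (sin (α / 2)) (k n / κ)
        (cos_sin_one α) hc.ne').toContinuousLinearEquiv.toHomeomorph)
      (by erw [hN]; exact mul_pos hm h)
    erw [hN, hE] at hl
    rw [mul_div_mul_left _ _ hm.ne', le_div_iff₀ h] at hl
    exact hl

end MagWedge

open MagWedge in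
/-- for the field tangent to a face and normal to the edge,
`α ↦ λ(B(α);W_α)` is non-decreasing on `(0, π/2]`. -/
theorem lambdaWedge_monotone_normal_field :
    MonotoneOn (fun α : ℝ => lambdaWedge α (Real.cos (α / 2)) (Real.sin (α / 2)) 0)
      (Set.Ioc 0 (π / 2)) := by
  rintro α ⟨ha0, ha1⟩ β ⟨hb0, hb1⟩ hab
  rcases hab.eq_or_lt with rfl | hlt
  · exact le_rfl
  have hsa : 0 < sin α := sin_pos_of_pos_of_lt_pi ha0 (by linarith [pi_pos])
  have hsb : 0 < sin β := sin_pos_of_pos_of_lt_pi hb0 (by linarith [pi_pos])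
  have hcb : 0 ≤ cos β := cos_nonneg_of_mem_Icc ⟨by linarith, hb1⟩
  have hκ : cos β / sin β < cos α / sin α := by
    rw [div_lt_div_iff₀ hsb hsa]
    have := sin_pos_of_pos_of_lt_pi (x := β - α) (by linarith) (by linarith [pi_pos])
    rw [sin_sub] at this
    linarith
  refine le_csInf ?_ ?_
  · obtain ⟨u, h1, h2, h3⟩ := nonempty_test β hb0 hb1
    exact ⟨_, u, h1, h2, h3, rfl⟩
  · rintro r ⟨u, hu, hs, hp, rfl⟩
    let L := (chg (cos (β / 2)) (sin (β / 2)) 1 (cos_sin_one β) one_pos.ne').toContinuousLinearEquiv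
    have hw : ContDiff ℝ (⊤ : ℕ∞) (u ∘ L.symm) := hu.comp L.symm.contDiff
    have hws : HasCompactSupport (u ∘ L.symm) := hs.comp_homeomorph L.symm.toHomeomorph
    have hi := main_ineq α _ ha0 ha1 (div_nonneg hcb hsb.le) hκ _ hw hws
    obtain ⟨m, hm, hN, hE⟩ := key β 1 hb0 hb1 one_pos (cos_sin_one β) _ hw
    have hid : (u ∘ L.symm) ∘ L = u := by ext x; simp
    change norm3D _ ((u ∘ L.symm) ∘ L) = _ at hN
    change energy3D _ _ _ _ ((u ∘ L.symm) ∘ L) = _ at hE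
    rw [hid, one_mul] at hN hE
    rw [hN] at hp ⊢
    rw [hE, mul_div_mul_left _ _ hm.ne', le_div_iff₀ (pos_of_mul_pos_right hp hm.le)]
    exact hi
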